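/- arXiv:1702.03961 — 2 statements merged into one kernel-verified Lean document; each statement's English description precedes it below -/
import Mathlib

section
/- For every m ≥ 1 there exists a nondeterministic transition system (Inequality Gadget) over a three-letter alphabet {α₁, α₂, α_s} on the state set Q = {acc} ∪ {p₀, p₁, …, p_{2m}} ∪ {u₁, …, u_m, ū₁, …, ū_m} ∪ {v₁, …, v_m, v̄₁, …, v̄_m} (all states distinct, so 6m + 2 states) with δ(acc, a) = {acc} for every letter a, such that for every subset C ⊆ Q with p₀ ∈ C, C ∩ ({acc, p₁, …, p_{2m}}) = ∅, and such that for every i exactly one of u_i, ū_i belongs to C and exactly one of v_i, v̄_i belongs to C, the following hold, where δ(C, w) denotes the set of states reachable from C on word w: (i) if there exists i with (u_i ∈ C) not equivalent to (v_i ∈ C), then there exists a word w of length m + 1 with acc ∉ δ(C, w) and δ(C, w) = {p_{2m}} ∪ (C ∩ ({u₁,…,u_m,ū₁,…,ū_m,v₁,…,v_m,v̄₁,…,v̄_m})), and every word w of length m + 1 with acc ∉ δ(C, w) satisfies this same equality; (ii) if for every i one has (u_i ∈ C ↔ v_i ∈ C), then acc ∈ δ(C, w) for every word w of length at least m + 1;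 (iii) acc ∈ δ(C, w) for every word w of length strictly greater than m + 1. -/
/-- The state set of the Inequality Gadget: the absorbing state `acc`, the control-flow states
`p 0, …, p 2m`, and the variable states `u i, ubar i, v i, vbar i` for `i` ranging over `Fin m`;
in total `6m + 2` distinct states. -/
inductive IneqState (m : ℕ) where
  | acc : IneqState m
  | p : Fin (2 * m + 1) → IneqState m
  | u : Fin m → IneqState m
  | ubar : Fin m → IneqState m
  | v : Fin m → IneqState m
  | vbar : Fin m → IneqState m
  deriving DecidableEq

/-- One step of a nondeterministic transition system on a set of states. -/
def stepSet {Q A : Type*} (δ : Q → A → Set Q) (C : Set Q) (a : A) : Set Q :=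
  ⋃ q ∈ C, δ q a

/-- The set of states reachable from the configuration `C` by reading the word `w`. -/
def evalFrom {Q A : Type*} (δ : Q → A → Set Q) (C : Set Q) (w : List A) : Set Q :=
  w.foldl (stepSet δ) C

/-- The variable states of the Inequality Gadget. -/
def IneqState.varStates (m : ℕ) : Set (IneqState m) :=
  {s | ∃ i : Fin m,
    s = IneqState.u i ∨ s = IneqState.ubar i ∨ s = IneqState.v i ∨ s = IneqState.vbar i}

/-!
The gadget is deterministic, so the states of a configuration evolve independently of one another.
Letter `0` rotates both variables by one position, and the letters `1` and `2` claim that the bits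
currently in front are `(1, 0)` and `(0, 1)` respectively, sending every variable state that
contradicts the claim to `acc`. The control state allows at most `m` rotations and a single claim,
which has to come before the `m`-th rotation. Hence the only words of length at least `m + 1` on
which it survives are `0 ^ i · a · 0 ^ (m - i)` with `i < m` and `a ≠ 0`. Such a word brings every
variable state back to its place, except for those contradicting the claim `a` about the `i`-th
bits; for valid variables, some claim `a` is uncontradicted iff the `i`-th bits differ.
-/

theorem evalFrom_singleton {Q A : Type*} (f : Q → A → Q) (C : Set Q) (w : List A) :
    evalFrom (fun q a => {f q a}) C w = (fun q => w.foldl f q) '' C := by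
  induction w generalizing C with
  | nil => exact (Set.image_id C).symm
  | cons a w ih =>
    have hstep : stepSet (fun q a => {f q a}) C a = (f · a) '' C :=
      (Set.image_eq_iUnion (f · a) C).symm
    calc evalFrom (fun q a => {f q a}) C (a :: w)
        = evalFrom (fun q a => {f q a}) ((f · a) '' C) w := by rw [← hstep]; rfl
      _ = (fun q => (a :: w).foldl f q) '' C := by rw [ih, Set.image_image]; rfl

namespace IneqState

open scoped Fin.CommRing

variable {m : ℕ}

/-- The control state with counter `k`; a counter above `2 * m` overflows into `acc`. -/
def ctrl (m k : ℕ) : IneqState m :=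
  if h : k < 2 * m + 1 then p ⟨k, h⟩ else acc

theorem p_eq_ctrl (k : Fin (2 * m + 1)) : p k = ctrl m k := by
  simp [ctrl, Nat.lt_succ_iff.1 k.isLt]

theorem ctrl_eq_acc_iff {k : ℕ} : ctrl m k = acc ↔ 2 * m < k := by
  unfold ctrl
  split_ifs with h
  · simpa using Nat.lt_succ_iff.1 h
  · simpa using h

/-- The variable states at position `i` that contradict the claim made by a letter: `1` claims that
the `i`-th bits of the two variables are `(1, 0)`, `2` claims that they are `(0, 1)`, and `0` makes
no claim. -/
def clash (i : Fin m) : Fin 3 → Set (IneqState m)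
  | 0 => ∅
  | 1 => {ubar i, v i}
  | 2 => {u i, vbar i}

theorem clash_subset_varStates (i : Fin m) (a : Fin 3) : clash i a ⊆ varStates m := by
  intro s hs
  fin_cases a
  · exact hs.elim
  · exact ⟨i, .inr (hs.imp_right .inl)⟩
  · exact ⟨i, hs.imp_right fun h => .inr (.inr h)⟩

theorem exists_disjoint_clash_iff {C : Set (IneqState m)} {i : Fin m}
    (hu : u i ∈ C ↔ ubar i ∉ C) (hv : v i ∈ C ↔ vbar i ∉ C) :
    (∃ a ≠ 0, Disjoint C (clash i a)) ↔ ¬(u i ∈ C ↔ v i ∈ C) := by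
  have hclaims : (∃ a ≠ 0, Disjoint C (clash i a)) ↔
      (ubar i ∉ C ∧ v i ∉ C) ∨ (u i ∉ C ∧ vbar i ∉ C) := by
    simp [Fin.exists_fin_succ, clash]
  rw [hclaims]
  tauto

theorem eq_union_inter_varStates {C : Set (IneqState m)} (h0 : p 0 ∈ C) (hacc : acc ∉ C)
    (hp : ∀ k : Fin (2 * m + 1), k ≠ 0 → p k ∉ C) : C = {p 0} ∪ (C ∩ varStates m) := by
  ext s
  cases s with
  | p k => by_cases hk : k = 0 <;> simp [varStates, hk, h0, hp]
  | _ => simp [varStates, hacc]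

/-- Cyclic rotation of both variables by `d` positions, fixing `acc` and the control states. -/
def rotate (d : Fin m) : IneqState m → IneqState m
  | acc => acc
  | p k => p k
  | u i => u (i - d)
  | ubar i => ubar (i - d)
  | v i => v (i - d)
  | vbar i => vbar (i - d)

theorem rotate_mem_varStates {d : Fin m} {s : IneqState m} (hs : s ∈ varStates m) :
    rotate d s ∈ varStates m := by
  obtain ⟨i, rfl | rfl | rfl | rfl⟩ := hs <;> simp [rotate, varStates]

/-- The word `0 ^ i · a · 0 ^ (m - i)`, which makes the claim `a` about the `i`-th bits. -/
def claimWord (i : Fin m) (a : Fin 3) : List (Fin 3) :=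
  List.replicate i 0 ++ a :: List.replicate (m - i) 0

theorem length_claimWord (i : Fin m) (a : Fin 3) : (claimWord i a).length = m + 1 := by
  simp only [claimWord, List.length_append, List.length_replicate, List.length_cons]
  omega

section Gadget

variable [NeZero m]

theorem rotate_zero (s : IneqState m) : rotate 0 s = s := by
  cases s <;> simp [rotate]

theorem rotate_rotate (d e : Fin m) (s : IneqState m) :
    rotate e (rotate d s) = rotate (d + e) s := by
  cases s <;> simp [rotate, sub_sub]

theorem rotate_mem_clash_zero_iff {d : Fin m} {s : IneqState m} {a : Fin 3} :
    rotate d s ∈ clash 0 a ↔ s ∈ clash d a := by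
  cases s <;> fin_cases a <;> simp [rotate, clash, sub_eq_zero]

open scoped Classical in
/-- The transition map of the gadget. In the control states the counter values below `m` are those
before the claim, and the values from `m` on those after it. -/
noncomputable def step : IneqState m → Fin 3 → IneqState m
  | acc, _ => acc
  | p k, a =>
    if a = 0 then if (k : ℕ) + 1 = m then acc else ctrl m (k + 1)
    else if (k : ℕ) < m then ctrl m (k + m) else acc
  | s, a => if s ∈ clash 0 a then acc else if a = 0 then rotate 1 s else s

theorem foldl_step_acc (w : List (Fin 3)) : w.foldl step (acc : IneqState m) = acc :=
  List.foldl_fixed' (fun _ => rfl) w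

theorem step_ctrl_zero {k : ℕ} (hk : k + 1 ≠ m) : step (ctrl m k) 0 = ctrl m (k + 1) := by
  by_cases h : k < 2 * m + 1
  · simp [ctrl, h, step, hk]
  · rw [ctrl_eq_acc_iff.2 (by omega), ctrl_eq_acc_iff.2 (by omega), step]

theorem step_ctrl_zero_eq_acc {k : ℕ} (hk : k + 1 = m) : step (ctrl m k) 0 = acc := by
  simp [ctrl, step, hk, show k < 2 * m + 1 by omega]

theorem step_ctrl_of_lt {k : ℕ} {a : Fin 3} (ha : a ≠ 0) (hk : k < m) :
    step (ctrl m k) a = ctrl m (k + m) := by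
  simp [ctrl, step, ha, hk, show k < 2 * m + 1 by omega]

theorem step_ctrl_eq_acc {k : ℕ} {a : Fin 3} (ha : a ≠ 0) (hk : m ≤ k) :
    step (ctrl m k) a = acc := by
  unfold ctrl
  split_ifs <;> simp [step, ha, hk]

theorem foldl_step_ctrl_replicate {k l : ℕ} (h : k + l < m ∨ m ≤ k) :
    (List.replicate l 0).foldl step (ctrl m k) = ctrl m (k + l) := by
  induction l generalizing k with
  | zero => rfl
  | succ l ih =>
    rw [List.replicate_succ, List.foldl_cons, step_ctrl_zero (by omega), ih (by omega)]
    congr 1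
    omega

theorem eq_replicate_of_foldl_step_ctrl_ne_acc {k : ℕ} {w : List (Fin 3)} (hk : m ≤ k)
    (hw : w.foldl step (ctrl m k) ≠ acc) :
    w = List.replicate w.length 0 ∧ k + w.length ≤ 2 * m := by
  induction w generalizing k with
  | nil => simpa [ctrl_eq_acc_iff] using hw
  | cons a w ih =>
    rw [List.foldl_cons] at hw
    obtain rfl : a = 0 := by
      by_contra ha
      exact hw (by rw [step_ctrl_eq_acc ha hk, foldl_step_acc])
    rw [step_ctrl_zero (by omega)] at hw
    obtain ⟨hzero, hlen⟩ := ih (by omega) hw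
    exact ⟨congrArg (0 :: ·) hzero, by rw [List.length_cons]; omega⟩

theorem exists_eq_replicate_append_of_foldl_step_ctrl_ne_acc {k : ℕ} {w : List (Fin 3)} (hk : k < m)
    (hlen : m + 1 ≤ k + w.length) (hw : w.foldl step (ctrl m k) ≠ acc) :
    ∃ (l : ℕ) (a : Fin 3), k + l < m ∧ a ≠ 0 ∧
      w = List.replicate l 0 ++ a :: List.replicate (m - (k + l)) 0 := by
  induction w generalizing k with
  | nil => rw [List.length_nil] at hlen; omega
  | cons a w ih =>
    rw [List.foldl_cons] at hw
    rw [List.length_cons] at hlen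
    by_cases ha : a = 0
    · subst ha
      have hkm : k + 1 ≠ m := fun h => hw (by rw [step_ctrl_zero_eq_acc h, foldl_step_acc])
      rw [step_ctrl_zero hkm] at hw
      obtain ⟨l, a, hl, ha, rfl⟩ := ih (by omega) (by omega) hw
      exact ⟨l + 1, a, by omega, ha, by simp [List.replicate_succ, add_assoc, add_comm 1 l]⟩
    · rw [step_ctrl_of_lt ha hk] at hw
      obtain ⟨hzero, hle⟩ := eq_replicate_of_foldl_step_ctrl_ne_acc (by omega) hw
      have hwlen : w.length = m - (k + 0) := by omega
      exact ⟨0, a, by omega, ha, by rw [← hwlen, ← hzero]; rfl⟩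

open scoped Classical in
theorem step_of_mem_varStates {s : IneqState m} (hs : s ∈ varStates m) (a : Fin 3) :
    step s a = if s ∈ clash 0 a then acc else if a = 0 then rotate 1 s else s := by
  obtain ⟨i, rfl | rfl | rfl | rfl⟩ := hs <;> rfl

theorem foldl_step_replicate_of_mem_varStates {s : IneqState m} (hs : s ∈ varStates m) (l : ℕ) :
    (List.replicate l 0).foldl step s = rotate l s := by
  induction l generalizing s with
  | zero => simp [rotate_zero]
  | succ l ih =>
    have hstep : step s 0 = rotate 1 s := by simp [step_of_mem_varStates hs, clash]
    rw [List.replicate_succ, List.foldl_cons, hstep, ih (rotate_mem_varStates hs), rotate_rotate,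
      Nat.cast_succ, add_comm]

theorem foldl_step_claimWord_p_zero (i : Fin m) {a : Fin 3} (ha : a ≠ 0) :
    (claimWord i a).foldl step (p 0) = p (Fin.last (2 * m)) := by
  rw [claimWord, List.foldl_append, List.foldl_cons, p_eq_ctrl, p_eq_ctrl, Fin.val_zero,
    foldl_step_ctrl_replicate (by omega), zero_add, step_ctrl_of_lt ha i.isLt,
    foldl_step_ctrl_replicate (by omega), Fin.val_last]
  congr 1
  omega

open scoped Classical in
theorem foldl_step_claimWord_of_mem_varStates {s : IneqState m} (hs : s ∈ varStates m) (i : Fin m)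
    {a : Fin 3} (ha : a ≠ 0) :
    (claimWord i a).foldl step s = if s ∈ clash i a then acc else s := by
  have hturn : i + ((m - i : ℕ) : Fin m) = 0 := by
    rw [Nat.cast_sub i.isLt.le]
    simp
  rw [claimWord, List.foldl_append, List.foldl_cons, foldl_step_replicate_of_mem_varStates hs,
    Fin.cast_val_eq_self, step_of_mem_varStates (rotate_mem_varStates hs), if_neg ha]
  simp only [rotate_mem_clash_zero_iff]
  split_ifs
  · exact foldl_step_acc _
  · rw [foldl_step_replicate_of_mem_varStates (rotate_mem_varStates hs), rotate_rotate, hturn,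
      rotate_zero]

/-- The transition function of the gadget. -/
noncomputable def delta (q : IneqState m) (a : Fin 3) : Set (IneqState m) :=
  {step q a}

theorem evalFrom_delta (C : Set (IneqState m)) (w : List (Fin 3)) :
    evalFrom delta C w = (fun s => w.foldl step s) '' C :=
  evalFrom_singleton step C w

theorem exists_eq_claimWord_of_acc_notMem_evalFrom {C : Set (IneqState m)} {w : List (Fin 3)}
    (h0 : p 0 ∈ C) (hlen : m + 1 ≤ w.length) (hw : acc ∉ evalFrom delta C w) :
    ∃ (i : Fin m) (a : Fin 3), a ≠ 0 ∧ Disjoint C (clash i a) ∧ w = claimWord i a := by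
  have hsafe : ∀ s ∈ C, w.foldl step s ≠ acc := by simpa [evalFrom_delta] using hw
  have hctrl : w.foldl step (ctrl m 0) ≠ acc := by simpa [p_eq_ctrl] using hsafe _ h0
  obtain ⟨l, a, hl, ha, hword⟩ :=
    exists_eq_replicate_append_of_foldl_step_ctrl_ne_acc (NeZero.pos m) (by omega) hctrl
  rw [zero_add] at hl hword
  obtain rfl : w = claimWord ⟨l, hl⟩ a := hword
  refine ⟨⟨l, hl⟩, a, ha, Set.disjoint_left.2 fun s hs hclash => hsafe s hs ?_, rfl⟩
  rw [foldl_step_claimWord_of_mem_varStates (clash_subset_varStates _ _ hclash) _ ha, if_pos hclash]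

theorem evalFrom_claimWord {V : Set (IneqState m)} {i : Fin m} {a : Fin 3} (hV : V ⊆ varStates m)
    (ha : a ≠ 0) (hclash : Disjoint V (clash i a)) :
    evalFrom delta ({p 0} ∪ V) (claimWord i a) = {p (Fin.last (2 * m))} ∪ V := by
  have hfix : Set.EqOn (fun s => (claimWord i a).foldl step s) id V := fun s hs =>
    (foldl_step_claimWord_of_mem_varStates (hV hs) i ha).trans
      (if_neg (Set.disjoint_left.1 hclash hs))
  rw [evalFrom_delta, Set.image_union, Set.image_singleton, foldl_step_claimWord_p_zero i ha,
    hfix.image_eq, Set.image_id]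

end Gadget

end IneqState

/-- The Inequality Gadget: a nondeterministic transition system over a three-letter alphabet
on `6m + 2` states checking inequality of two valid variables. From any configuration `C`
containing `p 0`, none of `acc, p 1, …, p 2m`, with both variables valid: (i) if the variables
differ, some word of length `m + 1` avoids `acc` and reaches `{p 2m} ∪ (C ∩ varStates)`, and
every word of length `m + 1` avoiding `acc` reaches exactly this configuration; (ii) if the
variables agree, every word of length `≥ m + 1` reaches `acc`; (iii) every word of length
`> m + 1` reaches `acc`. -/
theorem inequality_gadget (m : ℕ) (hm : 1 ≤ m) :
    ∃ δ : IneqState m → Fin 3 → Set (IneqState m),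
      (∀ a : Fin 3, δ IneqState.acc a = {IneqState.acc}) ∧
      ∀ C : Set (IneqState m),
        IneqState.p 0 ∈ C →
        IneqState.acc ∉ C →
        (∀ i : Fin (2 * m + 1), i ≠ 0 → IneqState.p i ∉ C) →
        (∀ i : Fin m, IneqState.u i ∈ C ↔ IneqState.ubar i ∉ C) →
        (∀ i : Fin m, IneqState.v i ∈ C ↔ IneqState.vbar i ∉ C) →
        (((∃ i : Fin m, ¬(IneqState.u i ∈ C ↔ IneqState.v i ∈ C)) →
            ((∃ w : List (Fin 3), w.length = m + 1 ∧ IneqState.acc ∉ evalFrom δ C w ∧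
                evalFrom δ C w =
                  {IneqState.p (Fin.last (2 * m))} ∪ (C ∩ IneqState.varStates m)) ∧
             (∀ w : List (Fin 3), w.length = m + 1 → IneqState.acc ∉ evalFrom δ C w →
                evalFrom δ C w =
                  {IneqState.p (Fin.last (2 * m))} ∪ (C ∩ IneqState.varStates m)))) ∧
         ((∀ i : Fin m, IneqState.u i ∈ C ↔ IneqState.v i ∈ C) →
            ∀ w : List (Fin 3), m + 1 ≤ w.length → IneqState.acc ∈ evalFrom δ C w) ∧
         (∀ w : List (Fin 3), m + 1 < w.length → IneqState.acc ∈ evalFrom δ C w)) := by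
  have : NeZero m := ⟨by omega⟩
  refine ⟨IneqState.delta, fun _ => rfl, fun C h0 hacc hp hu hv => ?_⟩
  have hC := IneqState.eq_union_inter_varStates h0 hacc hp
  have hdiffer := fun i => IneqState.exists_disjoint_clash_iff (hu i) (hv i)
  have hword := fun w => IneqState.exists_eq_claimWord_of_acc_notMem_evalFrom (w := w) h0
  have heval : ∀ i a, a ≠ 0 → Disjoint C (IneqState.clash i a) →
      evalFrom IneqState.delta C (IneqState.claimWord i a) =
        {IneqState.p (Fin.last (2 * m))} ∪ (C ∩ IneqState.varStates m) := fun i a ha hclash => by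
    conv_lhs => rw [hC]
    exact IneqState.evalFrom_claimWord Set.inter_subset_right ha
      (hclash.mono_left Set.inter_subset_left)
  refine ⟨fun ⟨i, hi⟩ => ⟨?_, fun w hw hsafe => ?_⟩, fun heq w hw => ?_, fun w hw => ?_⟩
  · obtain ⟨a, ha, hclash⟩ := (hdiffer i).2 hi
    refine ⟨IneqState.claimWord i a, IneqState.length_claimWord i a, ?_, heval i a ha hclash⟩
    simp [heval i a ha hclash, hacc]
  · obtain ⟨j, a, ha, hclash, rfl⟩ := hword w hw.ge hsafe
    exact heval j a ha hclash
  · by_contra hsafe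
    obtain ⟨i, a, ha, hclash, -⟩ := hword w hw hsafe
    exact (hdiffer i).1 ⟨a, ha, hclash⟩ (heq i)
  · by_contra hsafe
    obtain ⟨i, a, -, -, rfl⟩ := hword w hw.le hsafe
    exact hw.ne' (IneqState.length_claimWord i a)
end

section
/- For every m ≥ 1 there exists a nondeterministic transition system (Incrementation Gadget) over a three-letter alphabet {α_a, α_c, α_p} on the state set Q = {acc} ∪ {p₀, p₁, …, p_{2m}} ∪ {v₁, …, v_m, v̄₁, …, v̄_m} (all states distinct, so 4m + 2 states) with δ(acc, a) = {acc} for every letter a, such that for every subset C ⊆ Q with p₀ ∈ C, C ∩ ({acc, p₁, …, p_{2m}}) = ∅, and such that for every i exactly one of v_i, v̄_i belongs to C, the following hold, where val(C) = Σ_{i : v_i ∈ C} 2^{i−1} and δ(C, w) denotes the set of states reachable from C on word w: (i) if val(C) < 2^m − 1, then there exists a word w of length m + 1 with acc ∉ δ(C, w) and δ(C, w) = {p_{2m}} ∪ {v_i : the i-th binary digit of val(C)+1 is 1} ∪ {v̄_i : the i-th binary digit of val(C)+1 is 0}, and every word w of length m + 1 with acc ∉ δ(C, w) satisfies this same equality;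 (ii) if val(C) = 2^m − 1, then acc ∈ δ(C, w) for every word w of length at least m + 1; (iii) acc ∈ δ(C, w) for every word w of length strictly greater than m + 1. -/
open scoped Classical

/-- The state set of the Incrementation Gadget: the absorbing state `acc`, the control-flow
states `p 0, …, p 2m`, and the variable states `v i, vbar i` for `i` ranging over `Fin m`;
in total `4m + 2` distinct states. -/
inductive IncState (m : ℕ) where
  | acc : IncState m
  | p : Fin (2 * m + 1) → IncState m
  | v : Fin m → IncState m
  | vbar : Fin m → IncState m
  deriving DecidableEq

/-- The value encoded by the variable in a configuration: `val C = Σ_{i : v i ∈ C} 2^i`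
(the index `i : Fin m` is 0-based here, `v 0` being the least significant bit). -/
noncomputable def incVal (m : ℕ) (C : Set (IncState m)) : ℕ :=
  ∑ i : Fin m, if IncState.v i ∈ C then 2 ^ (i : ℕ) else 0

/-- The configuration reached by a complete computation of the Incrementation Gadget:
the target state together with the binary encoding of `val C + 1`
(bit `i` of `val C + 1` determines whether `v i` or `vbar i` is active). -/
noncomputable def incTarget (m : ℕ) (C : Set (IncState m)) : Set (IncState m) :=
  {IncState.p (Fin.last (2 * m))} ∪
    {s | ∃ i : Fin m, Nat.testBit (incVal m C + 1) (i : ℕ) = true ∧ s = IncState.v i} ∪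
    {s | ∃ i : Fin m, Nat.testBit (incVal m C + 1) (i : ℕ) = false ∧ s = IncState.vbar i}

/-!
The automaton is deterministic on states. Every letter except *add* rotates the variable by one
position, so that after `k` letters of the carry phase the digit of index `k` sits in position `0`,
the only position the letters inspect. *Carry* demands that this digit is `1` and clears it, while
the control moves from `p k` to `p (k + 1)`; the invariant is that the current value plus `2 ^ k`
equals the original value plus one. *Add* demands that the digit is `0` and sets it, which completes
the incrementation, and jumps from `p k` to `p (m + k)`; from there *propagate* restores the
original alignment. A value `2 ^ m - 1` leaves no digit for *add* to set.
-/

section TransitionSystem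

variable {Q A : Type*}

lemma evalFrom_cons (δ : Q → A → Set Q) (C : Set Q) (a : A) (w : List A) :
    evalFrom δ C (a :: w) = evalFrom δ (stepSet δ C a) w := rfl

lemma mem_evalFrom_of_forall_mem {δ : Q → A → Set Q} {q : Q} (hδ : ∀ a, q ∈ δ q a) {C : Set Q}
    (hq : q ∈ C) (w : List A) : q ∈ evalFrom δ C w := by
  induction w generalizing C with
  | nil => exact hq
  | cons a _ ih => exact ih (Set.mem_biUnion hq (hδ a))

end TransitionSystem

section BinaryValue

variable {m : ℕ}

lemma ofBits_eq_sum (b : Fin m → Bool) :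
    Nat.ofBits b = ∑ i, if b i then 2 ^ (i : ℕ) else 0 := by
  induction m with
  | zero => simp
  | succ m ih =>
    rw [Nat.ofBits_succ, ih, Fin.sum_univ_succ, Finset.mul_sum, add_comm]
    congr 1
    · cases b 0 <;> rfl
    · exact Finset.sum_congr rfl fun i _ ↦ by simp [pow_succ, mul_comm]

lemma ofBits_update_true {b : Fin m → Bool} {i : Fin m} (hi : b i = false) :
    Nat.ofBits (Function.update b i true) = Nat.ofBits b + 2 ^ (i : ℕ) := by
  have hterm (j : Fin m) : (if Function.update b i true j then 2 ^ (j : ℕ) else 0) =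
      (if b j then 2 ^ (j : ℕ) else 0) + if j = i then 2 ^ (j : ℕ) else 0 := by
    rcases eq_or_ne j i with rfl | hj
    · simp [hi]
    · simp [hj]
  simp only [ofBits_eq_sum, hterm, Finset.sum_add_distrib, Finset.sum_ite_eq', Finset.mem_univ,
    if_true]

lemma ofBits_update_false {b : Fin m → Bool} {i : Fin m} (hi : b i = true) :
    Nat.ofBits (Function.update b i false) + 2 ^ (i : ℕ) = Nat.ofBits b := by
  rw [← ofBits_update_true (Function.update_self ..), Function.update_idem, ← hi,
    Function.update_eq_self]

end BinaryValue

namespace IncState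

open scoped Fin.CommRing

variable {m : ℕ}

/-- The state recording that the digit in position `i` is `c`. -/
def digit (i : Fin m) (c : Bool) : IncState m := if c then v i else vbar i

variable [NeZero m]

/-- The action of the carry letter `α_c` on states. Since `i - 1` is cyclic on `Fin m`, a digit
leaving position `0` reenters at the most significant position. -/
def carry : IncState m → IncState m
  | acc => acc
  | p k => if (k : ℕ) + 1 < m then p (k + 1) else acc
  | v i => if i = 0 then vbar (i - 1) else v (i - 1)
  | vbar i => if i = 0 then acc else vbar (i - 1)

/-- The action of the add letter `α_a` on states. -/
def add : IncState m → IncState m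
  | acc => acc
  | p k => if (k : ℕ) < m then p (m + k) else acc
  | v i => if i = 0 then acc else v i
  | vbar i => if i = 0 then v i else vbar i

/-- The action of the propagate letter `α_p` on states. -/
def propagate : IncState m → IncState m
  | acc => acc
  | p k => if m ≤ k ∧ (k : ℕ) < 2 * m then p (k + 1) else acc
  | v i => v (i - 1)
  | vbar i => vbar (i - 1)

/-- The action of all letters on states; `0`, `1`, `2` encode `α_c`, `α_a`, `α_p`. -/
def next : Fin 3 → IncState m → IncState m := ![carry, add, propagate]

/-- The transition function of the Incrementation Gadget. -/
def transition (q : IncState m) (a : Fin 3) : Set (IncState m) := {next a q}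

lemma transition_acc (a : Fin 3) : transition acc a = {(acc : IncState m)} := by
  fin_cases a <;> rfl

lemma stepSet_transition (C : Set (IncState m)) (a : Fin 3) :
    stepSet transition C a = next a '' C :=
  (Set.image_eq_iUnion _ _).symm

/-- The configuration with control state `p k` whose variable has digits `b`, rotated by `k`: the
digit of index `i` is stored in position `i - k` modulo `m`. It is meant for `k ≤ 2 * m`; the
control state is taken modulo `2 * m + 1`. -/
def config (k : ℕ) (b : Fin m → Bool) : Set (IncState m) :=
  insert (p k) (Set.range fun i ↦ digit (i - k) (b i))

section Config

variable {k : ℕ} {b : Fin m → Bool}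

lemma acc_notMem_config : acc ∉ config k b := by
  simp [config, digit, ite_eq_iff]

lemma p_mem_config {j : Fin (2 * m + 1)} : p j ∈ config k b ↔ j = k := by
  simp [config, digit, ite_eq_iff]

lemma v_mem_config {i : Fin m} : v i ∈ config k b ↔ b (i + k) = true := by
  simp [config, digit, ite_eq_iff, sub_eq_iff_eq_add]

lemma vbar_mem_config {i : Fin m} : vbar i ∈ config k b ↔ b (i + k) = false := by
  simp [config, digit, ite_eq_iff, sub_eq_iff_eq_add]

lemma image_config (f : IncState m → IncState m) :
    f '' config k b = insert (f (p k)) (Set.range fun i ↦ f (digit (i - k) (b i))) := by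
  rw [config, Set.image_insert_eq, ← Set.range_comp, Function.comp_def]

lemma mem_image_config_of_control {f : IncState m → IncState m} {q : IncState m}
    (h : f (p k) = q) : q ∈ f '' config k b :=
  ⟨p k, Set.mem_insert _ _, h⟩

lemma mem_image_config_of_digit {f : IncState m → IncState m} {q : IncState m}
    (h : f (digit 0 (b k)) = q) : q ∈ f '' config k b :=
  ⟨digit (k - k) (b k), Set.mem_insert_of_mem _ ⟨k, rfl⟩, by rwa [sub_self]⟩

lemma carry_image_config (hk : k + 1 < m) (hb : b k = true) :
    carry '' config k b = config (k + 1) (Function.update b k false) := by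
  have hval : ((k : Fin (2 * m + 1)) : ℕ) = k := Fin.val_cast_of_lt (by lia)
  rw [image_config, config]
  congr! 3 with i
  · simp [carry, hval, hk]
  · rcases eq_or_ne i k with rfl | hi
    · simp [digit, carry, hb]
    · cases hbi : b i <;> simp [digit, carry, hbi, hi, sub_eq_zero, sub_sub]

lemma acc_mem_carry_image_config (hk : k ≤ 2 * m) (h : ¬(k + 1 < m ∧ b k = true)) :
    acc ∈ carry '' config k b := by
  have hval : ((k : Fin (2 * m + 1)) : ℕ) = k := Fin.val_cast_of_lt (by lia)
  by_cases hkm : k + 1 < m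
  · exact mem_image_config_of_digit (by simp_all [digit, carry])
  · exact mem_image_config_of_control (by simp [carry, hval, hkm])

lemma add_image_config (hk : k < m) (hb : b k = false) :
    add '' config k b = config (m + k) (Function.update b k true) := by
  have hval : ((k : Fin (2 * m + 1)) : ℕ) = k := Fin.val_cast_of_lt (by lia)
  rw [image_config, config]
  congr! 3 with i
  · simp [add, hval, hk]
  · rcases eq_or_ne i k with rfl | hi
    · simp [digit, add, hb]
    · cases hbi : b i <;> simp [digit, add, hbi, hi, sub_eq_zero]

lemma acc_mem_add_image_config (hk : k ≤ 2 * m) (h : ¬(k < m ∧ b k = false)) :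
    acc ∈ add '' config k b := by
  have hval : ((k : Fin (2 * m + 1)) : ℕ) = k := Fin.val_cast_of_lt (by lia)
  by_cases hkm : k < m
  · exact mem_image_config_of_digit (by simp_all [digit, add])
  · exact mem_image_config_of_control (by simp [add, hval, hkm])

lemma propagate_image_config (hmk : m ≤ k) (hk : k < 2 * m) :
    propagate '' config k b = config (k + 1) b := by
  have hval : ((k : Fin (2 * m + 1)) : ℕ) = k := Fin.val_cast_of_lt (by lia)
  rw [image_config, config]
  congr! 3 with i
  · simp [propagate, hval, hmk, hk]
  · cases b i <;> simp [digit, propagate, sub_sub]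

lemma acc_mem_propagate_image_config (hk : k ≤ 2 * m) (h : ¬(m ≤ k ∧ k < 2 * m)) :
    acc ∈ propagate '' config k b := by
  have hval : ((k : Fin (2 * m + 1)) : ℕ) = k := Fin.val_cast_of_lt (by lia)
  exact mem_image_config_of_control (by rw [propagate, hval, if_neg h])

end Config

/-- `IsLive n ℓ D` describes the configurations `D` that a computation avoiding `acc` can attain
`ℓ` letters after starting with the value `n`: either all of these letters are carries and `2 ^ ℓ`
is still to be added, or the add letter is among them and the other `j` letters are rotations. -/
inductive IsLive (n : ℕ) : ℕ → Set (IncState m) → Prop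
  | carrying {k : ℕ} {b : Fin m → Bool} :
      k < m → Nat.ofBits b + 2 ^ k = n + 1 → IsLive n k (config k b)
  | propagating {j : ℕ} {b : Fin m → Bool} :
      j ≤ m → Nat.ofBits b = n + 1 → IsLive n (j + 1) (config (m + j) b)

namespace IsLive

variable {n ℓ : ℕ} {D : Set (IncState m)}

lemma acc_notMem (hD : IsLive n ℓ D) : acc ∉ D := by
  cases hD <;> exact acc_notMem_config

lemma length_le (hD : IsLive n ℓ D) : ℓ ≤ m + 1 := by
  cases hD <;> lia

lemma lt_two_pow (hD : IsLive n ℓ D) (hℓ : m ≤ ℓ) : n + 1 < 2 ^ m := by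
  cases hD with
  | carrying hk => lia
  | @propagating _ b _ hb => exact hb ▸ Nat.ofBits_lt_two_pow b

lemma carry_image {k : ℕ} {b : Fin m → Bool} (hk : k + 1 < m) (hbk : b k = true)
    (hb : Nat.ofBits b + 2 ^ k = n + 1) : IsLive n (k + 1) (carry '' config k b) := by
  rw [carry_image_config hk hbk]
  have hupd := ofBits_update_false hbk
  rw [Fin.val_cast_of_lt (by lia)] at hupd
  exact .carrying hk (by rw [pow_succ]; lia)

lemma add_image {k : ℕ} {b : Fin m → Bool} (hk : k < m) (hbk : b k = false)
    (hb : Nat.ofBits b + 2 ^ k = n + 1) : IsLive n (k + 1) (add '' config k b) := by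
  rw [add_image_config hk hbk]
  exact .propagating hk.le (by rw [ofBits_update_true hbk, Fin.val_cast_of_lt hk, hb])

lemma propagate_image {j : ℕ} {b : Fin m → Bool} (hj : j < m) (hb : Nat.ofBits b = n + 1) :
    IsLive n (j + 2) (propagate '' config (m + j) b) := by
  rw [propagate_image_config (by lia) (by lia)]
  exact .propagating hj hb

lemma acc_mem_or_next (hD : IsLive n ℓ D) (a : Fin 3) :
    acc ∈ next a '' D ∨ IsLive n (ℓ + 1) (next a '' D) := by
  cases hD with
  | @carrying _ b hk hb =>
    fin_cases a
    · by_cases h : ℓ + 1 < m ∧ b ℓ = true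
      · exact .inr (carry_image h.1 h.2 hb)
      · exact .inl (acc_mem_carry_image_config (by lia) h)
    · by_cases h : ℓ < m ∧ b ℓ = false
      · exact .inr (add_image h.1 h.2 hb)
      · exact .inl (acc_mem_add_image_config (by lia) h)
    · exact .inl (acc_mem_propagate_image_config (by lia) (by lia))
  | propagating hj hb =>
    fin_cases a
    · exact .inl (acc_mem_carry_image_config (by lia) (by lia))
    · exact .inl (acc_mem_add_image_config (by lia) (by lia))
    · rcases hj.lt_or_eq with hj | rfl
      · exact .inr (propagate_image hj hb)
      · exact .inl (acc_mem_propagate_image_config (by lia) (by lia))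

lemma exists_next (hn : n + 1 < 2 ^ m) (hD : IsLive n ℓ D) (hℓ : ℓ ≤ m) :
    ∃ a, IsLive n (ℓ + 1) (next a '' D) := by
  cases hD with
  | @carrying _ b hk hb =>
    cases hbk : b ℓ with
    | false => exact ⟨1, add_image hk hbk hb⟩
    | true =>
      have hupd := ofBits_update_false hbk
      rw [Fin.val_cast_of_lt hk] at hupd
      have hpow : 2 ^ (ℓ + 1) < 2 ^ m := by rw [pow_succ]; lia
      exact ⟨0, carry_image ((Nat.pow_lt_pow_iff_right one_lt_two).1 hpow) hbk hb⟩
  | propagating hj hb => exact ⟨2, propagate_image hℓ hb⟩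

lemma acc_mem_or_evalFrom (hD : IsLive n ℓ D) (w : List (Fin 3)) :
    acc ∈ evalFrom transition D w ∨ IsLive n (ℓ + w.length) (evalFrom transition D w) := by
  induction w generalizing ℓ D with
  | nil => exact .inr hD
  | cons a w ih =>
    rw [evalFrom_cons, stepSet_transition, List.length_cons, add_comm w.length, ← add_assoc]
    rcases hD.acc_mem_or_next a with hacc | hlive
    · exact .inl (mem_evalFrom_of_forall_mem (fun a ↦ (transition_acc a).ge rfl) hacc w)
    · exact ih hlive

lemma exists_evalFrom (hn : n + 1 < 2 ^ m) (hD : IsLive n ℓ D) (r : ℕ) (hr : ℓ + r ≤ m + 1) :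
    ∃ w : List (Fin 3), w.length = r ∧ IsLive n (ℓ + r) (evalFrom transition D w) := by
  induction r generalizing ℓ D with
  | zero => exact ⟨[], rfl, hD⟩
  | succ r ih =>
    obtain ⟨a, ha⟩ := hD.exists_next hn (by lia)
    obtain ⟨w, rfl, hw⟩ := ih ha (by lia)
    refine ⟨a :: w, rfl, ?_⟩
    rwa [evalFrom_cons, stepSet_transition, add_comm w.length, ← add_assoc]

end IsLive

lemma config_two_mul_eq_incTarget {C : Set (IncState m)} {b : Fin m → Bool}
    (hb : Nat.ofBits b = incVal m C + 1) : config (2 * m) b = incTarget m C := by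
  have hbit (i : Fin m) : (incVal m C + 1).testBit i = b i := by
    rw [← hb, Nat.testBit_ofBits_lt _ _ i.isLt]
  ext (_ | j | i | i)
  · simp [acc_notMem_config, incTarget]
  · rw [p_mem_config, Fin.natCast_eq_last]
    simp [incTarget]
  · simp [v_mem_config, incTarget, hbit]
  · simp [vbar_mem_config, incTarget, hbit]

lemma IsLive.eq_incTarget {C D : Set (IncState m)} (hD : IsLive (incVal m C) (m + 1) D) :
    D = incTarget m C := by
  cases hD with
  | carrying hk => lia
  | propagating _ hb => rw [← two_mul, config_two_mul_eq_incTarget hb]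

lemma eq_config_zero {C : Set (IncState m)} (hp₀ : p 0 ∈ C) (hacc : acc ∉ C)
    (hp : ∀ j, j ≠ 0 → p j ∉ C) (hv : ∀ i, v i ∈ C ↔ vbar i ∉ C) :
    C = config 0 fun i ↦ decide (v i ∈ C) := by
  ext (_ | j | i | i)
  · simp [acc_notMem_config, hacc]
  · rw [p_mem_config]
    exact ⟨not_imp_not.1 (hp j), fun hj ↦ by simp_all⟩
  · simp [v_mem_config]
  · simp [vbar_mem_config, hv]

lemma isLive_zero {C : Set (IncState m)} (hp₀ : p 0 ∈ C) (hacc : acc ∉ C)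
    (hp : ∀ j, j ≠ 0 → p j ∉ C) (hv : ∀ i, v i ∈ C ↔ vbar i ∉ C) :
    IsLive (incVal m C) 0 C := by
  rw [eq_config_zero hp₀ hacc hp hv]
  exact .carrying (NeZero.pos m) (by simp [ofBits_eq_sum, incVal, v_mem_config])

end IncState

/-- The Incrementation Gadget: a nondeterministic transition system over a three-letter
alphabet on `4m + 2` states incrementing a valid variable. From any configuration `C`
containing `p 0`, none of `acc, p 1, …, p 2m`, with the variable valid: (i) if
`val C < 2^m - 1`, some word of length `m + 1` avoids `acc` and reaches the configuration
`{p 2m}` together with the binary encoding of `val C + 1`, and every word of length `m + 1`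
avoiding `acc` reaches exactly this configuration; (ii) if `val C = 2^m - 1`, every word of
length `≥ m + 1` reaches `acc`; (iii) every word of length `> m + 1` reaches `acc`. -/
theorem incrementation_gadget (m : ℕ) (hm : 1 ≤ m) :
    ∃ δ : IncState m → Fin 3 → Set (IncState m),
      (∀ a : Fin 3, δ IncState.acc a = {IncState.acc}) ∧
      ∀ C : Set (IncState m),
        IncState.p 0 ∈ C →
        IncState.acc ∉ C →
        (∀ i : Fin (2 * m + 1), i ≠ 0 → IncState.p i ∉ C) →
        (∀ i : Fin m, IncState.v i ∈ C ↔ IncState.vbar i ∉ C) →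
        ((incVal m C < 2 ^ m - 1 →
            ((∃ w : List (Fin 3), w.length = m + 1 ∧ IncState.acc ∉ evalFrom δ C w ∧
                evalFrom δ C w = incTarget m C) ∧
             (∀ w : List (Fin 3), w.length = m + 1 → IncState.acc ∉ evalFrom δ C w →
                evalFrom δ C w = incTarget m C))) ∧
         (incVal m C = 2 ^ m - 1 →
            ∀ w : List (Fin 3), m + 1 ≤ w.length → IncState.acc ∈ evalFrom δ C w) ∧
         (∀ w : List (Fin 3), m + 1 < w.length → IncState.acc ∈ evalFrom δ C w)) := by
  have : NeZero m := ⟨by lia⟩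
  refine ⟨IncState.transition, IncState.transition_acc, fun C hp₀ hacc hp hv ↦ ?_⟩
  have hC : IncState.IsLive (incVal m C) 0 C := IncState.isLive_zero hp₀ hacc hp hv
  have hlive (w : List (Fin 3)) (hw : IncState.acc ∉ evalFrom IncState.transition C w) :
      IncState.IsLive (incVal m C) w.length (evalFrom IncState.transition C w) := by
    simpa [hw] using hC.acc_mem_or_evalFrom w
  refine ⟨fun hlt ↦ ⟨?_, fun w hlen hw ↦ ?_⟩, fun hval w hlen ↦ ?_, fun w hlen ↦ ?_⟩
  · obtain ⟨w, hlen, hw⟩ := hC.exists_evalFrom (by lia) (m + 1) (by lia)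
    rw [zero_add] at hw
    exact ⟨w, hlen, hw.acc_notMem, hw.eq_incTarget⟩
  · exact (hlen ▸ hlive w hw).eq_incTarget
  · by_contra hw
    have := (hlive w hw).lt_two_pow (by lia)
    lia
  · by_contra hw
    have := (hlive w hw).length_le
    lia
end
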